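/- Every holomorphic vector bundle over ℂP¹ splits as a direct sum of holomorphic line bundles O(a₁) ⊕ ⋯ ⊕ O(a_n); in particular every holomorphic line subbundle admits a holomorphic complement when the rank is at least 2. -/

import Mathlib

noncomputable section

namespace BirkhoffFactorization

open Filter Topology Metric
open scoped Matrix

section Laurent

variable {E : Type*} [NormedAddCommGroup E] [NormedSpace ℂ E]

/-- The `j`-th Laurent coefficient at the origin of a function on the punctured plane. -/
def laurentCoeff (F : ℂ → E) (j : ℤ) : E :=
  (2 * Real.pi * Complex.I : ℂ)⁻¹ • ∮ w in C(0, 1), w⁻¹ • (w ^ (-j) • F w)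

theorem differentiableOn_zpow_smul {F : ℂ → E} (hF : DifferentiableOn ℂ F {0}ᶜ) (j : ℤ) :
    DifferentiableOn ℂ (fun w : ℂ => w ^ j • F w) {0}ᶜ :=
  (differentiableOn_zpow j _ (Or.inl (by simp))).smul hF

theorem sphere_subset_compl_zero {ρ : ℝ} (hρ : 0 < ρ) : sphere (0 : ℂ) ρ ⊆ {0}ᶜ := by
  intro z hz
  rw [mem_sphere_zero_iff_norm] at hz
  simp only [Set.mem_compl_iff, Set.mem_singleton_iff]
  rintro rfl
  simp at hz
  linarith

theorem laurentCoeff_eq_circleIntegral {F : ℂ → E} (hF : DifferentiableOn ℂ F {0}ᶜ)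
    {ρ : ℝ} (hρ : 0 < ρ) (j : ℤ) :
    laurentCoeff F j =
      (2 * Real.pi * Complex.I : ℂ)⁻¹ • ∮ w in C(0, ρ), w⁻¹ • (w ^ (-j) • F w) := by
  have key : ∀ r R : ℝ, 0 < r → r ≤ R →
      (∮ w in C(0, R), w⁻¹ • (w ^ (-j) • F w)) = ∮ w in C(0, r), w⁻¹ • (w ^ (-j) • F w) := by
    intro r R hr hrR
    have hd := differentiableOn_zpow_smul hF (-j)
    have := Complex.circleIntegral_sub_center_inv_smul_eq_of_differentiable_on_annulus_off_countable
      (c := 0) hr hrR (f := fun w : ℂ => w ^ (-j) • F w) Set.countable_empty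
      (hd.continuousOn.mono ?_) ?_
    · simpa using this
    · rintro z ⟨-, hz⟩ h0
      exact hz (by simpa [Set.mem_singleton_iff.1 h0] using hr)
    · rintro z ⟨⟨-, hz⟩, -⟩
      refine hd.differentiableAt (isOpen_compl_singleton.mem_nhds fun h0 => hz ?_)
      simpa [Set.mem_singleton_iff.1 h0] using hr.le
  rw [laurentCoeff]
  rcases le_total ρ 1 with h | h
  · rw [key ρ 1 hρ h]
  · rw [key 1 ρ one_pos h]

theorem norm_laurentCoeff_mul_zpow_le {F : ℂ → E} (hF : DifferentiableOn ℂ F {0}ᶜ)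
    {ρ : ℝ} (hρ : 0 < ρ) {M : ℝ} (hM : ∀ z ∈ sphere (0 : ℂ) ρ, ‖F z‖ ≤ M) (j : ℤ) :
    ‖laurentCoeff F j‖ * ρ ^ j ≤ M := by
  rw [laurentCoeff_eq_circleIntegral hF hρ]
  have := circleIntegral.norm_two_pi_i_inv_smul_integral_le_of_norm_le_const (c := 0) hρ.le
    (f := fun w : ℂ => w⁻¹ • (w ^ (-j) • F w)) (C := ρ⁻¹ * (ρ ^ (-j) * M)) ?_
  · calc _ ≤ ρ * (ρ⁻¹ * (ρ ^ (-j) * M)) * ρ ^ j := by gcongr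
      _ = M := by
        rw [zpow_neg]
        field_simp
  · intro z hz
    have h1 := mem_sphere_zero_iff_norm.1 hz
    rw [norm_smul, norm_smul, norm_inv, norm_zpow, h1]
    gcongr
    exact hM z hz

theorem exists_norm_le_sphere {F : ℂ → E} (hF : DifferentiableOn ℂ F {0}ᶜ) {ρ : ℝ} (hρ : 0 < ρ) :
    ∃ M, ∀ z ∈ sphere (0 : ℂ) ρ, ‖F z‖ ≤ M :=
  (isCompact_sphere 0 ρ).exists_bound_of_continuousOn
    (hF.continuousOn.mono (sphere_subset_compl_zero hρ))

theorem summable_half_pow_natAbs : Summable fun j : ℤ => (1 / 2 : ℝ) ^ j.natAbs := by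
  refine Summable.of_nat_of_neg ?_ ?_ <;> simpa using summable_geometric_two

theorem norm_laurentCoeff_mul_zpow_le_half_pow {F : ℂ → E} (hF : DifferentiableOn ℂ F {0}ᶜ)
    {ρ : ℝ} (hρ : 0 < ρ) {M : ℝ} (hM₁ : ∀ z ∈ sphere (0 : ℂ) (2 * ρ), ‖F z‖ ≤ M)
    (hM₂ : ∀ z ∈ sphere (0 : ℂ) (ρ / 2), ‖F z‖ ≤ M) (j : ℤ) :
    ‖laurentCoeff F j‖ * ρ ^ j ≤ M * (1 / 2) ^ j.natAbs := by
  obtain ⟨k, rfl | rfl⟩ := j.eq_nat_or_neg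
  · have := norm_laurentCoeff_mul_zpow_le hF (by positivity) hM₁ k
    simp only [Int.natAbs_natCast, zpow_natCast, mul_pow, div_pow, one_pow] at this ⊢
    rw [mul_one_div, le_div_iff₀ (by positivity)]
    linarith
  · have := norm_laurentCoeff_mul_zpow_le hF (by positivity) hM₂ (-k)
    simp only [Int.natAbs_neg, Int.natAbs_natCast, zpow_neg, zpow_natCast, div_pow, one_pow,
      inv_div] at this ⊢
    rw [mul_one_div, le_div_iff₀ (by positivity)]
    calc _ = ‖laurentCoeff F (-↑k)‖ * (2 ^ k / ρ ^ k) := by field_simp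
      _ ≤ M := this

theorem summable_norm_laurentCoeff_mul_zpow {F : ℂ → E} (hF : DifferentiableOn ℂ F {0}ᶜ)
    {ρ : ℝ} (hρ : 0 < ρ) : Summable fun j : ℤ => ‖laurentCoeff F j‖ * ρ ^ j := by
  obtain ⟨M₁, hM₁⟩ := exists_norm_le_sphere hF (ρ := 2 * ρ) (by positivity)
  obtain ⟨M₂, hM₂⟩ := exists_norm_le_sphere hF (ρ := ρ / 2) (by positivity)
  refine Summable.of_nonneg_of_le (fun j => by positivity)
    (norm_laurentCoeff_mul_zpow_le_half_pow hF hρ (M := max M₁ M₂)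
      (fun z hz => (hM₁ z hz).trans (le_max_left _ _))
      (fun z hz => (hM₂ z hz).trans (le_max_right _ _)))
    (summable_half_pow_natAbs.mul_left _)

theorem laurentCoeff_comp_clm [CompleteSpace E] {F : ℂ → E} (hF : DifferentiableOn ℂ F {0}ᶜ)
    (φ : E →L[ℂ] ℂ) (j : ℤ) : laurentCoeff (fun z => φ (F z)) j = φ (laurentCoeff F j) := by
  rw [laurentCoeff, laurentCoeff, map_smul]
  congr 1
  simp only [circleIntegral]
  rw [← φ.intervalIntegral_comp_comm]
  · simp
  · refine CircleIntegrable.out (c := 0) (R := 1) (f := fun w : ℂ => w⁻¹ • (w ^ (-j) • F w))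
      (ContinuousOn.circleIntegrable zero_le_one ?_)
    have h1 := (differentiableOn_zpow_smul (differentiableOn_zpow_smul hF (-j)) (-1)).continuousOn
    simpa [zpow_neg] using h1.mono (sphere_subset_compl_zero one_pos)

theorem hasSum_laurentCoeff_complex {F : ℂ → ℂ} (hF : DifferentiableOn ℂ F {0}ᶜ) {z : ℂ}
    (hz : z ≠ 0) : HasSum (fun j : ℤ => z ^ j • laurentCoeff F j) (F z) := by
  have hρ : 0 < ‖z‖ := norm_pos_iff.2 hz
  have : Fact (0 < 2 * Real.pi) := ⟨Real.two_pi_pos⟩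
  let f : C(AddCircle (2 * Real.pi), ℂ) :=
    ⟨fun x => F (‖z‖ * (AddCircle.toCircle x : ℂ)), by
      refine hF.continuousOn.comp_continuous (by fun_prop) fun x => ?_
      simp [hz]⟩
  have hf : ∀ x : ℝ, f x = F (circleMap 0 ‖z‖ x) := by
    intro x
    simp only [f, ContinuousMap.coe_mk, AddCircle.toCircle_apply_mk, Circle.coe_exp, circleMap,
      zero_add]
    congr 3
    have : (Real.pi : ℂ) ≠ 0 := by exact_mod_cast Real.pi_ne_zero
    push_cast
    field_simp
  have hcoef : ∀ j, fourierCoeff f j = (‖z‖ : ℂ) ^ j • laurentCoeff F j := by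
    intro j
    rw [fourierCoeff_eq_intervalIntegral _ _ 0, laurentCoeff_eq_circleIntegral hF hρ]
    simp only [circleIntegral, hf, zero_add, fourier_coe_apply, deriv_circleMap, circleMap,
      smul_eq_mul]
    rw [Complex.real_smul, mul_left_comm, ← intervalIntegral.integral_const_mul,
      ← intervalIntegral.integral_const_mul, ← intervalIntegral.integral_const_mul]
    refine intervalIntegral.integral_congr fun x _ => ?_
    have hz' : (‖z‖ : ℂ) ≠ 0 := by exact_mod_cast hρ.ne'
    have hpi : (Real.pi : ℂ) ≠ 0 := by exact_mod_cast Real.pi_ne_zero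
    have h1 : Complex.exp (2 * Real.pi * Complex.I * ((-j : ℤ) : ℂ) * x / ((2 * Real.pi : ℝ) : ℂ))
        = Complex.exp (x * Complex.I) ^ (-j) := by
      rw [← Complex.exp_int_mul]
      congr 1
      push_cast
      field_simp
    simp only [h1, mul_zpow, zpow_neg]
    have := Complex.exp_ne_zero (x * Complex.I)
    push_cast
    field_simp
  have hsum : Summable (fourierCoeff f) := by
    refine Summable.of_norm ?_
    refine (summable_norm_laurentCoeff_mul_zpow hF hρ).congr fun j => ?_
    rw [hcoef, norm_smul, norm_zpow, Complex.norm_real, norm_norm, mul_comm]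
  have := has_pointwise_sum_fourier_series_of_summable hsum (z.arg : AddCircle (2 * Real.pi))
  have hz2 : (‖z‖ : ℂ) * Complex.exp (z.arg * Complex.I) = z := Complex.norm_mul_exp_arg_mul_I z
  rw [hf, circleMap, zero_add, hz2] at this
  convert! this using 2 with j
  rw [hcoef, fourier_coe_apply]
  have h1 : Complex.exp (2 * Real.pi * Complex.I * (j : ℂ) * z.arg / ((2 * Real.pi : ℝ) : ℂ))
      = Complex.exp (z.arg * Complex.I) ^ j := by
    have hpi : (Real.pi : ℂ) ≠ 0 := by exact_mod_cast Real.pi_ne_zero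
    rw [← Complex.exp_int_mul]
    congr 1
    push_cast
    field_simp
  rw [h1]
  nth_rewrite 1 [← hz2]
  simp only [mul_zpow, smul_eq_mul]
  ring

theorem hasSum_laurentCoeff [CompleteSpace E] {F : ℂ → E} (hF : DifferentiableOn ℂ F {0}ᶜ) {z : ℂ}
    (hz : z ≠ 0) : HasSum (fun j : ℤ => z ^ j • laurentCoeff F j) (F z) := by
  have hs : Summable (fun j : ℤ => z ^ j • laurentCoeff F j) := by
    refine Summable.of_norm ?_
    refine (summable_norm_laurentCoeff_mul_zpow hF (norm_pos_iff.2 hz)).congr fun j => ?_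
    rw [norm_smul, norm_zpow, mul_comm]
  convert! hs.hasSum
  refine (SeparatingDual.eq_iff_forall_dual_eq (R := ℂ)).2 fun φ => ?_
  have h1 := φ.hasSum hs.hasSum
  have h2 := hasSum_laurentCoeff_complex (F := fun z => φ (F z))
    (φ.differentiable.comp_differentiableOn hF) hz
  refine h2.unique ?_
  convert! h1 using 2 with j
  rw [laurentCoeff_comp_clm hF, map_smul]

end Laurent

section Toeplitz

variable {𝔸 : Type*} [NormedRing 𝔸]

theorem summable_norm_comp_sub {H : ℤ → 𝔸} (hH : Summable fun j => ‖H j‖) (m : ℤ) :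
    Summable fun k : ℕ => ‖H (k - m)‖ :=
  hH.comp_injective (i := fun k : ℕ => (k : ℤ) - m) fun a b h => by simpa using h

theorem tsum_norm_comp_sub_le {H : ℤ → 𝔸} (hH : Summable fun j => ‖H j‖) (m : ℤ) :
    ∑' k : ℕ, ‖H (k - m)‖ ≤ ∑' j, ‖H j‖ :=
  tsum_comp_le_tsum_of_inj hH (fun _ => norm_nonneg _) (i := fun k : ℕ => (k : ℤ) - m)
    fun a b h => by simpa using h

theorem summable_norm_mul_of_bounded {ι : Type*} {u b : ι → 𝔸} (hu : Summable fun i => ‖u i‖)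
    {B : ℝ} (hb : ∀ i, ‖b i‖ ≤ B) : Summable fun i => ‖u i * b i‖ :=
  Summable.of_nonneg_of_le (fun _ => norm_nonneg _)
    (fun i => (norm_mul_le _ _).trans (mul_le_mul_of_nonneg_left (hb i) (norm_nonneg _)))
    (hu.mul_right B)

theorem norm_tsum_mul_le_of_bounded {H : ℤ → 𝔸} (hH : Summable fun j => ‖H j‖) {b : ℕ → 𝔸}
    {B : ℝ} (hb : ∀ k, ‖b k‖ ≤ B) (m : ℤ) :
    ‖∑' k : ℕ, H (k - m) * b k‖ ≤ (∑' j, ‖H j‖) * B := by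
  have hB : 0 ≤ B := (norm_nonneg _).trans (hb 0)
  have hs := summable_norm_comp_sub hH m
  calc _ ≤ ∑' k : ℕ, ‖H (k - m) * b k‖ := norm_tsum_le_tsum_norm (summable_norm_mul_of_bounded hs hb)
    _ ≤ ∑' k : ℕ, ‖H (k - m)‖ * B := by
      refine (summable_norm_mul_of_bounded hs hb).tsum_le_tsum (fun k => ?_) (hs.mul_right B)
      exact (norm_mul_le _ _).trans (mul_le_mul_of_nonneg_left (hb k) (norm_nonneg _))
    _ = (∑' k : ℕ, ‖H (k - m)‖) * B := tsum_mul_right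
    _ ≤ _ := by
      gcongr
      exact tsum_norm_comp_sub_le hH m

variable [CompleteSpace 𝔸]

/-- Solvability of the Toeplitz system attached to a small perturbation of the identity. -/
theorem exists_toeplitz_solution [NormOneClass 𝔸] {H : ℤ → 𝔸} (hH : Summable fun j => ‖H j‖)
    (hlt : ∑' j, ‖H j‖ < 1) :
    ∃ b : ℕ → 𝔸, b 0 = 1 ∧ (∀ m, ‖b m‖ ≤ 1) ∧
      (∀ m, m ≠ 0 → b m = -∑' k : ℕ, H (k - m) * b k) ∧
      ∀ m, m ≠ 0 → ‖b m‖ ≤ ∑' j, ‖H j‖ := by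
  set K := ∑' j, ‖H j‖ with hK
  have hK0 : 0 ≤ K := tsum_nonneg fun _ => norm_nonneg _
  let φ (b : ℕ → 𝔸) (m : ℕ) : 𝔸 := if m = 0 then 1 else -∑' k : ℕ, H (k - m) * b k
  have hφ : ∀ (b : ℕ → 𝔸) (B : ℝ), (∀ k, ‖b k‖ ≤ B) → ∀ m, ‖φ b m‖ ≤ max 1 (K * B) := by
    intro b B hb m
    by_cases hm : m = 0
    · simp [φ, hm]
    · simp only [φ, hm, if_false, norm_neg]
      exact (norm_tsum_mul_le_of_bounded hH hb m).trans (le_max_right _ _)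
  let Φ (b : BoundedContinuousFunction ℕ 𝔸) : BoundedContinuousFunction ℕ 𝔸 :=
    BoundedContinuousFunction.ofNormedAddCommGroupDiscrete (φ b) (max 1 (K * ‖b‖))
      (hφ b ‖b‖ b.norm_coe_le_norm)
  have hΦ : ContractingWith ⟨K, hK0⟩ Φ := by
    refine ⟨by exact_mod_cast hlt, LipschitzWith.of_dist_le_mul fun b c => ?_⟩
    have hd : 0 ≤ dist b c := dist_nonneg
    refine (BoundedContinuousFunction.dist_le (mul_nonneg hK0 hd)).2 fun m => ?_
    simp only [Φ, BoundedContinuousFunction.coe_ofNormedAddCommGroupDiscrete, φ]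
    by_cases hm : m = 0
    · simpa [hm] using mul_nonneg hK0 hd
    · simp only [hm, if_false, dist_neg_neg]
      have hs := summable_norm_comp_sub hH m
      rw [dist_eq_norm, ← (summable_norm_mul_of_bounded hs b.norm_coe_le_norm).of_norm.tsum_sub
        (summable_norm_mul_of_bounded hs c.norm_coe_le_norm).of_norm]
      simp only [← mul_sub]
      refine norm_tsum_mul_le_of_bounded hH (b := fun k => b k - c k) (fun k => ?_) m
      rw [← dist_eq_norm]
      exact BoundedContinuousFunction.dist_coe_le_dist k
  obtain ⟨b, hb⟩ : ∃ b, Φ b = b := ⟨_, hΦ.fixedPoint_isFixedPt⟩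
  have hb' : ∀ m, b m = φ b m := fun m => by
    conv_lhs => rw [← hb]
    rfl
  have hnorm : ‖b‖ ≤ 1 := by
    by_contra! h
    have : ‖b‖ ≤ max 1 (K * ‖b‖) := by
      refine (BoundedContinuousFunction.norm_le (by positivity)).2 fun m => ?_
      rw [hb']
      exact hφ b ‖b‖ b.norm_coe_le_norm m
    rcases le_max_iff.1 this with h' | h'
    · linarith
    · nlinarith
  have hbm : ∀ m, m ≠ 0 → b m = -∑' k : ℕ, H (k - m) * b k := fun m hm => by
    rw [hb']
    simp [φ, hm]
  have hb1 : ∀ m, ‖b m‖ ≤ 1 := fun m => (b.norm_coe_le_norm m).trans hnorm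
  refine ⟨b, by rw [hb']; simp [φ], hb1, hbm, fun m hm => ?_⟩
  rw [hbm m hm, norm_neg]
  simpa using norm_tsum_mul_le_of_bounded hH hb1 m

variable [NormedAlgebra ℂ 𝔸]

/-- If `G` has Laurent coefficients `c`, and the power series with coefficients `b` is such that
the product `G z * ∑ b k z⁻ᵏ` has no negative Laurent coefficients, then this product extends to
an entire function. -/
theorem exists_entire_eq_mul_tsum {G : ℂ → 𝔸} {c : ℤ → 𝔸}
    (hG : ∀ z, z ≠ 0 → HasSum (fun j : ℤ => z ^ j • c j) (G z))
    (hc : ∀ ρ : ℝ, 0 < ρ → Summable fun j : ℤ => ‖c j‖ * ρ ^ j)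
    {b : ℕ → 𝔸} {B : ℝ} (hb : ∀ k, ‖b k‖ ≤ B)
    (hneg : ∀ m : ℕ, m ≠ 0 → ∑' k : ℕ, c (k - m) * b k = 0) :
    ∃ F : ℂ → 𝔸, Differentiable ℂ F ∧
      ∀ z : ℂ, 1 < ‖z‖ → F z = G z * ∑' k : ℕ, z⁻¹ ^ k • b k := by
  let e : ℤ × ℕ ≃ ℤ × ℕ :=
    { toFun := fun p => (p.1 + p.2, p.2)
      invFun := fun p => (p.1 - p.2, p.2)
      left_inv := fun p => by simp
      right_inv := fun p => by simp }
  let f (m : ℤ) : 𝔸 := ∑' k : ℕ, c (m + k) * b k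
  have hsum : ∀ z : ℂ, 1 < ‖z‖ →
      Summable (fun p : ℤ × ℕ => ‖z ^ p.1 • (c (p.1 + p.2) * b p.2)‖) ∧
      HasSum (fun p : ℤ × ℕ => z ^ p.1 • (c (p.1 + p.2) * b p.2))
        (G z * ∑' k : ℕ, z⁻¹ ^ k • b k) := by
    intro z hz
    have hz0 : z ≠ 0 := norm_pos_iff.1 (one_pos.trans hz)
    have h1 : Summable fun j : ℤ => ‖z ^ j • c j‖ :=
      (hc ‖z‖ (one_pos.trans hz)).congr fun j => by rw [norm_smul, norm_zpow, mul_comm]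
    have h2 : Summable fun k : ℕ => ‖z⁻¹ ^ k • b k‖ := by
      refine Summable.of_nonneg_of_le (fun _ => norm_nonneg _) (fun k => ?_)
        ((summable_geometric_of_lt_one (norm_nonneg z⁻¹) ?_).mul_right B)
      · rw [norm_smul, norm_pow]
        exact mul_le_mul_of_nonneg_left (hb k) (by positivity)
      · rw [norm_inv]
        exact inv_lt_one_of_one_lt₀ hz
    have hterm : ∀ p : ℤ × ℕ, (z ^ (e p).1 • c (e p).1) * (z⁻¹ ^ (e p).2 • b (e p).2) =
        z ^ p.1 • (c (p.1 + p.2) * b p.2) := by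
      intro p
      simp only [e, Equiv.coe_fn_mk, smul_mul_smul_comm]
      rw [zpow_add₀ hz0, inv_pow, zpow_natCast, mul_assoc,
        mul_inv_cancel₀ (pow_ne_zero _ hz0), mul_one]
    have h3 := summable_mul_of_summable_norm h1 h2
    have h4 := (hG z hz0).mul h2.of_norm.hasSum h3
    refine ⟨?_, ?_⟩
    · exact ((e.summable_iff).2 (h1.mul_norm h2)).congr fun p => by
        rw [← hterm p]
        rfl
    · convert! (e.hasSum_iff).2 h4 using 2 with p
      exact (hterm p).symm
  have hinner : ∀ m : ℤ, Summable fun k : ℕ => ‖c (m + k) * b k‖ := fun m => by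
    refine summable_norm_mul_of_bounded ?_ hb
    refine (by simpa using hc 1 one_pos : Summable fun j => ‖c j‖).comp_injective
      (i := fun k : ℕ => m + (k : ℤ)) fun a b h => by simpa using h
  have hf0 : ∀ m : ℤ, m ∉ Set.range ((↑) : ℕ → ℤ) → f m = 0 := by
    intro m hm
    obtain ⟨k, rfl | rfl⟩ := m.eq_nat_or_neg
    · exact absurd ⟨k, rfl⟩ hm
    · have hk : k ≠ 0 := by
        rintro rfl
        exact hm ⟨0, by simp⟩
      rw [← hneg k hk]
      exact tsum_congr fun l => by rw [neg_add_eq_sub]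
  have hsumf : ∀ z : ℂ, 1 < ‖z‖ →
      HasSum (fun m : ℕ => z ^ m • f m) (G z * ∑' k : ℕ, z⁻¹ ^ k • b k) := by
    intro z hz
    have h := (hsum z hz).2.prod_fiberwise (g := fun m : ℤ => z ^ m • f m)
      fun m => (hinner m).of_norm.hasSum.const_smul (z ^ m)
    rw [← Nat.cast_injective.hasSum_iff (g := ((↑) : ℕ → ℤ))] at h
    · simpa [Function.comp_def] using h
    · intro m hm
      rw [hf0 m hm, smul_zero]
  have hnorm : ∀ R : ℝ, 1 < R → Summable fun m : ℕ => R ^ m * ‖f m‖ := by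
    intro R hR
    have h1 := (hsum (R : ℂ) (by simpa [abs_of_pos (one_pos.trans hR)] using hR)).1.prod
    refine Summable.of_nonneg_of_le (fun m => by positivity) (fun m => ?_)
      (h1.comp_injective (i := ((↑) : ℕ → ℤ)) Nat.cast_injective)
    simp only [Function.comp, norm_smul, zpow_natCast, norm_pow, Complex.norm_real,
      Real.norm_eq_abs, abs_of_pos (one_pos.trans hR)]
    rw [tsum_mul_left]
    gcongr
    exact norm_tsum_le_tsum_norm (hinner m)
  refine ⟨fun z => ∑' m : ℕ, z ^ m • f m, fun z => ?_, fun z hz => (hsumf z hz).tsum_eq⟩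
  have hR : 1 < ‖z‖ + 2 := by linarith [norm_nonneg z]
  refine (Complex.differentiableOn_tsum_of_summable_norm (hnorm _ hR) (fun m => ?_)
    (isOpen_ball (x := (0 : ℂ)) (ε := ‖z‖ + 2)) fun m w hw => ?_).differentiableAt
    (isOpen_ball.mem_nhds (by simp))
  · fun_prop
  · rw [norm_smul, norm_pow]
    gcongr
    exact (mem_ball_zero_iff.1 hw).le

theorem isBigO_zpow_zpow_cobounded {m n : ℤ} (h : m ≤ n) :
    (fun z : ℂ => z ^ m) =O[Bornology.cobounded ℂ] fun z => z ^ n := by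
  refine Asymptotics.IsBigO.of_bound 1 ?_
  filter_upwards [tendsto_norm_cobounded_atTop.eventually_ge_atTop 1] with z hz
  rw [norm_zpow, norm_zpow, one_mul]
  exact zpow_le_zpow_right₀ hz h

/-- An invertible holomorphic function on the punctured plane, viewed as a transition function,
has an entire section which is generically invertible and has at most a pole at infinity. -/
theorem exists_entire_section [NormOneClass 𝔸] {g q : ℂ → 𝔸} (hg : DifferentiableOn ℂ g {0}ᶜ)
    (hq : DifferentiableOn ℂ q {0}ᶜ) (hgq : ∀ z, z ≠ 0 → g z * q z = 1)
    (hqg : ∀ z, z ≠ 0 → q z * g z = 1) :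
    ∃ (F : ℂ → 𝔸) (N : ℤ), Differentiable ℂ F ∧ IsUnit (F 2) ∧
      (fun z => q z * F z) =O[Bornology.cobounded ℂ] fun z => z ^ N := by
  obtain ⟨M₁, hM₁⟩ := exists_norm_le_sphere hg (ρ := 2) two_pos
  obtain ⟨M₂, hM₂⟩ := exists_norm_le_sphere hg (ρ := 1 / 2) (by norm_num)
  obtain ⟨M, hM0, hM₁, hM₂⟩ : ∃ M, 0 < M ∧ (∀ z ∈ sphere (0 : ℂ) 2, ‖g z‖ ≤ M) ∧
      ∀ z ∈ sphere (0 : ℂ) (1 / 2), ‖g z‖ ≤ M :=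
    ⟨max 1 (max M₁ M₂), by positivity, fun z hz => (hM₁ z hz).trans (by simp),
      fun z hz => (hM₂ z hz).trans (by simp)⟩
  -- approximate `q` by a Laurent polynomial
  set a := laurentCoeff q
  have ha := (summable_norm_laurentCoeff_mul_zpow hq (ρ := 2) two_pos).add
    (summable_norm_laurentCoeff_mul_zpow hq (ρ := 1 / 2) (by norm_num))
  set T := ∑' j : ℤ, (1 / 2 : ℝ) ^ j.natAbs
  have hT : 1 ≤ T := by
    simpa [T] using summable_half_pow_natAbs.le_tsum 0 fun _ _ => by positivity
  obtain ⟨S, hS⟩ := ((tendsto_order.1 (tendsto_tsum_compl_atTop_zero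
    fun j => ‖a j‖ * (2 : ℝ) ^ j + ‖a j‖ * (1 / 2 : ℝ) ^ j)).2 (1 / (2 * M * T))
    (by positivity)).exists
  let r (z : ℂ) : 𝔸 := ∑ j ∈ S, z ^ j • a j
  have hr : DifferentiableOn ℂ r {0}ᶜ := DifferentiableOn.fun_sum fun j _ =>
    differentiableOn_zpow_smul (differentiableOn_const _) j
  have htail : ∀ z : ℂ, ‖z‖ = 2 ∨ ‖z‖ = 1 / 2 → ‖r z - q z‖ ≤ 1 / (2 * M * T) := by
    intro z hz
    have hz0 : z ≠ 0 := by
      rintro rfl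
      norm_num at hz
    have h1 := hasSum_laurentCoeff hq hz0
    have h2 : ∑' j : {j // j ∉ S}, z ^ (j : ℤ) • a j = q z - r z := by
      rw [← h1.tsum_eq, ← h1.summable.sum_add_tsum_subtype_compl S]
      simp [r, a]
    rw [norm_sub_rev, ← h2]
    refine (tsum_of_norm_bounded (ha.subtype _).hasSum fun j => ?_).trans hS.le
    rw [norm_smul, norm_zpow, mul_comm]
    have : ∀ t : ℝ, 0 < t → 0 ≤ ‖a j‖ * t ^ (j : ℤ) := fun t ht => by positivity
    rcases hz with h | h <;> rw [h]
    · exact le_add_of_nonneg_right (this _ (by norm_num))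
    · exact le_add_of_nonneg_left (this _ (by norm_num))
  let H (z : ℂ) : 𝔸 := g z * r z - 1
  have hH : DifferentiableOn ℂ H {0}ᶜ := (hg.mul hr).sub_const 1
  have hHle : ∀ z : ℂ, ‖z‖ = 2 ∨ ‖z‖ = 1 / 2 → ‖H z‖ ≤ 1 / (2 * T) := by
    intro z hz
    have hz0 : z ≠ 0 := by
      rintro rfl
      norm_num at hz
    have hgM : ‖g z‖ ≤ M := by
      rcases hz with h | h
      · exact hM₁ z (by simpa using h)
      · exact hM₂ z (by simpa using h)
    calc ‖H z‖ = ‖g z * (r z - q z)‖ := by rw [mul_sub, hgq z hz0]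
      _ ≤ ‖g z‖ * ‖r z - q z‖ := norm_mul_le _ _
      _ ≤ M * (1 / (2 * M * T)) := by
        gcongr
        exact htail z hz
      _ = 1 / (2 * T) := by field_simp
  set h := laurentCoeff H
  have hh : ∀ j, ‖h j‖ ≤ 1 / (2 * T) * (1 / 2) ^ j.natAbs := fun j => by
    simpa using norm_laurentCoeff_mul_zpow_le_half_pow hH one_pos
      (fun z hz => hHle z (Or.inl (by simpa using hz)))
      (fun z hz => hHle z (Or.inr (by simpa using hz))) j
  have hhs : Summable fun j => ‖h j‖ := Summable.of_nonneg_of_le (fun _ => norm_nonneg _) hh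
    (summable_half_pow_natAbs.mul_left _)
  have hhalf : ∑' j, ‖h j‖ ≤ 1 / 2 := by
    refine (hhs.tsum_le_tsum hh (summable_half_pow_natAbs.mul_left _)).trans_eq ?_
    rw [tsum_mul_left]
    change 1 / (2 * T) * T = 1 / 2
    field_simp
  obtain ⟨b, hb0, hb1, hbm, hbK⟩ := exists_toeplitz_solution hhs (hhalf.trans_lt (by norm_num))
  -- the Laurent coefficients of `g * r`
  let c (j : ℤ) : 𝔸 := h j + Pi.single (M := fun _ => 𝔸) 0 1 j
  have hG : ∀ z, z ≠ 0 → HasSum (fun j : ℤ => z ^ j • c j) (g z * r z) := by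
    intro z hz
    have h1 := (hasSum_laurentCoeff hH hz).add
      (hasSum_single (f := fun j : ℤ => z ^ j • Pi.single (M := fun _ => 𝔸) 0 1 j) 0
        fun j hj => by simp [hj])
    simpa [c, H, smul_add] using h1
  have hc : ∀ ρ : ℝ, 0 < ρ → Summable fun j : ℤ => ‖c j‖ * ρ ^ j := by
    intro ρ hρ
    refine Summable.of_nonneg_of_le (fun j => by positivity) (fun j => ?_)
      ((summable_norm_laurentCoeff_mul_zpow hH hρ).add (hasSum_single
        (f := fun j : ℤ => ‖Pi.single (M := fun _ => 𝔸) 0 1 j‖ * ρ ^ j) 0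
        fun j hj => by simp [hj]).summable)
    rw [← add_mul]
    gcongr
    exact norm_add_le _ _
  have hneg : ∀ m : ℕ, m ≠ 0 → ∑' k : ℕ, c (k - m) * b k = 0 := by
    intro m hm
    have h1 := (summable_norm_mul_of_bounded (summable_norm_comp_sub hhs m) hb1).of_norm.hasSum.add
      (hasSum_single (f := fun k : ℕ => Pi.single (M := fun _ => 𝔸) 0 1 ((k : ℤ) - m) * b k) m
        fun k hk => by
          rw [Pi.single_eq_of_ne (by omega), zero_mul])
    simp only [sub_self, Pi.single_eq_same, one_mul, ← add_mul] at h1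
    rw [h1.tsum_eq, hbm m hm]
    simp
  obtain ⟨F, hF, hFG⟩ := exists_entire_eq_mul_tsum hG hc hb1 hneg
  have hsb : ∀ z : ℂ, 2 ≤ ‖z‖ → ∀ k : ℕ, ‖z⁻¹ ^ k‖ ≤ (1 / 2) ^ k := fun z hz k => by
    rw [norm_pow, norm_inv, one_div]
    gcongr
  obtain ⟨N, hN⟩ := S.bddAbove
  refine ⟨F, N, hF, ?_, ?_⟩
  · rw [hFG 2 (by simp)]
    refine IsUnit.mul ?_ ?_
    · rw [← sub_sub_cancel 1 (g 2 * r 2)]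
      refine isUnit_one_sub_of_norm_lt_one ?_
      rw [norm_sub_rev]
      refine (hHle 2 (Or.inl (by simp))).trans_lt ?_
      rw [div_lt_one (by positivity)]
      linarith
    · have h1 : Summable fun k : ℕ => (2 : ℂ)⁻¹ ^ k • b k := by
        refine Summable.of_norm_bounded summable_geometric_two fun k => ?_
        rw [norm_smul]
        exact mul_le_of_le_one_right (norm_nonneg _) (hb1 k) |>.trans (hsb 2 (by simp) k)
      rw [h1.tsum_eq_zero_add, hb0, pow_zero, one_smul, ← sub_neg_eq_add]
      refine isUnit_one_sub_of_norm_lt_one ?_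
      rw [norm_neg]
      refine (tsum_of_norm_bounded (g := fun k : ℕ => (1 / 2 : ℝ) / 2 / 2 ^ k)
        (hasSum_geometric_two' _) fun k => ?_).trans_lt (by norm_num : (1 / 2 : ℝ) < 1)
      rw [norm_smul]
      refine (mul_le_mul (hsb 2 (by simp) (k + 1)) ((hbK (k + 1) k.succ_ne_zero).trans hhalf)
        (norm_nonneg _) (by positivity)).trans_eq ?_
      rw [pow_succ, one_div_pow]
      ring
  · have h1 : r =O[Bornology.cobounded ℂ] fun z => z ^ N := by
      refine Asymptotics.IsBigO.fun_sum fun j hj => ?_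
      simpa using (isBigO_zpow_zpow_cobounded (hN hj)).smul
        (Asymptotics.isBigO_const_const (a j) (one_ne_zero (α := ℂ)) (Bornology.cobounded ℂ))
    have h2 : (fun z : ℂ => ∑' k : ℕ, z⁻¹ ^ k • b k) =O[Bornology.cobounded ℂ]
        fun _ => (1 : ℂ) := by
      refine Asymptotics.IsBigO.of_bound 2 ?_
      filter_upwards [tendsto_norm_cobounded_atTop.eventually_ge_atTop 2] with z hz
      rw [norm_one, mul_one]
      refine tsum_of_norm_bounded hasSum_geometric_two fun k => ?_
      rw [norm_smul]
      exact mul_le_of_le_one_right (norm_nonneg _) (hb1 k) |>.trans (hsb z hz k)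
    refine ((h1.mul h2).congr' ?_ ?_)
    · filter_upwards [tendsto_norm_cobounded_atTop.eventually_ge_atTop 2] with z hz
      rw [hFG z (by linarith), ← mul_assoc, ← mul_assoc, hqg z (norm_pos_iff.1 (by linarith)),
        one_mul]
    · exact Eventually.of_forall fun z => by simp

end Toeplitz

section MatrixDifferentiable

open scoped Matrix.Norms.Operator

variable {ι : Type*} [Fintype ι] [DecidableEq ι]

theorem differentiableOn_matrix_iff {F : ℂ → Matrix ι ι ℂ} {s : Set ℂ} :
    DifferentiableOn ℂ F s ↔ ∀ i j, DifferentiableOn ℂ (fun z => F z i j) s := by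
  refine ⟨fun h i j => ?_, fun h => ?_⟩
  · exact ((Matrix.entryLinearMap ℂ ℂ i j).toContinuousLinearMap).differentiable.comp_differentiableOn h
  · have : F = fun z => ∑ i, ∑ j, F z i j • Matrix.single i j (1 : ℂ) := by
      funext z
      conv_lhs => rw [Matrix.matrix_eq_sum_single (F z)]
      simp [Matrix.smul_single]
    rw [this]
    exact DifferentiableOn.fun_sum fun i _ => DifferentiableOn.fun_sum fun j _ =>
      (h i j).smul_const _

theorem differentiableOn_matrix_inv {F : ℂ → Matrix ι ι ℂ} {s : Set ℂ}
    (hF : ∀ i j, DifferentiableOn ℂ (fun z => F z i j) s) (hu : ∀ z ∈ s, IsUnit (F z)) (i j : ι) :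
    DifferentiableOn ℂ (fun z => (F z)⁻¹ i j) s := by
  have h : DifferentiableOn ℂ (fun z => (F z)⁻¹) s := fun z hz => by
    simp only [Matrix.nonsing_inv_eq_ringInverse]
    exact (differentiableAt_inverse (hu z hz)).comp_differentiableWithinAt z
      (differentiableOn_matrix_iff.2 hF z hz)
  exact differentiableOn_matrix_iff.1 h i j

theorem exists_entire_matrix_section {g q : ℂ → Matrix ι ι ℂ}
    (hg : ∀ i j, DifferentiableOn ℂ (fun z => g z i j) {0}ᶜ)
    (hq : ∀ i j, DifferentiableOn ℂ (fun z => q z i j) {0}ᶜ) (hgq : ∀ z, z ≠ 0 → g z * q z = 1) :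
    ∃ (F : ℂ → Matrix ι ι ℂ) (N : ℤ), (∀ i j, Differentiable ℂ fun z => F z i j) ∧
      IsUnit (F 2) ∧
      ∀ i j, (fun z => (q z * F z) i j) =O[Bornology.cobounded ℂ] fun z => z ^ N := by
  cases isEmpty_or_nonempty ι
  · exact ⟨1, 0, fun i => isEmptyElim i, isUnit_one, fun i => isEmptyElim i⟩
  obtain ⟨F, N, hF, h2, hN⟩ := exists_entire_section (differentiableOn_matrix_iff.2 hg)
    (differentiableOn_matrix_iff.2 hq) hgq fun z hz => mul_eq_one_comm.1 (hgq z hz)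
  refine ⟨F, N, fun i j => ?_, h2, fun i j => ?_⟩
  · exact differentiableOn_univ.1 (differentiableOn_matrix_iff.1 hF.differentiableOn i j)
  · exact ((Matrix.entryLinearMap ℂ ℂ i j).toContinuousLinearMap.isBigO_comp _ _).trans hN

end MatrixDifferentiable

section Sections

variable {ι : Type*}

/-- The square matrix with columns `f j z`. -/
def frame (f : ι → ℂ → ι → ℂ) (z : ℂ) : Matrix ι ι ℂ := Matrix.of fun i j => f j z i

theorem frame_update [DecidableEq ι] (f : ι → ℂ → ι → ℂ) (m : ι) (f' : ℂ → ι → ℂ) (z : ℂ) :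
    frame (Function.update f m f') z = (frame f z).updateCol m (f' z) := by
  ext i j
  by_cases h : j = m
  · subst h
    simp [frame]
  · simp [frame, h]

variable [Fintype ι]

/-- The vector-valued entire function `f` is a section, over the affine line, of the bundle whose
transition function has inverse `q`, with a pole of order at most `d` at infinity. -/
structure IsSectionOfDegree (q : ℂ → Matrix ι ι ℂ) (d : ℤ) (f : ℂ → ι → ℂ) : Prop where
  differentiable : Differentiable ℂ f
  isBigO : (fun z => q z *ᵥ f z) =O[Bornology.cobounded ℂ] fun z => z ^ d

theorem frame_mulVec (f : ι → ℂ → ι → ℂ) (z : ℂ) (v : ι → ℂ) :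
    frame f z *ᵥ v = ∑ j, v j • f j z := by
  ext i
  simp [frame, Matrix.mulVec, dotProduct, mul_comm]

theorem eventually_ne_cobounded (a : ℂ) : ∀ᶠ z in Bornology.cobounded ℂ, z ≠ a := by
  filter_upwards [tendsto_norm_cobounded_atTop.eventually_gt_atTop ‖a‖] with z hz
  rintro rfl
  exact lt_irrefl _ hz

theorem tendsto_zpow_cobounded_zero {m : ℤ} (hm : m < 0) :
    Tendsto (fun z : ℂ => z ^ m) (Bornology.cobounded ℂ) (𝓝 0) := by
  refine (isBigO_zpow_zpow_cobounded (show m ≤ -1 by omega)).trans_tendsto ?_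
  simpa using tendsto_inv₀_cobounded (α := ℂ)

/-- Sections of a bundle and of its dual are paired to zero if their degrees have negative sum. -/
theorem IsSectionOfDegree.dotProduct_eq_zero {g q : ℂ → Matrix ι ι ℂ} [DecidableEq ι]
    (hgq : ∀ z, z ≠ 0 → g z * q z = 1) {d e : ℤ} {f f' : ℂ → ι → ℂ}
    (hf : IsSectionOfDegree q d f) (hf' : IsSectionOfDegree (fun z => (g z)ᵀ) e f')
    (hde : e + d < 0) (z : ℂ) : f' z ⬝ᵥ f z = 0 := by
  have hdiff : Differentiable ℂ fun z => f' z ⬝ᵥ f z :=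
    Differentiable.fun_sum fun i _ =>
      (differentiable_pi.1 hf'.differentiable i).mul (differentiable_pi.1 hf.differentiable i)
  have hO : (fun z => f' z ⬝ᵥ f z) =O[Bornology.cobounded ℂ] fun z => z ^ (e + d) := by
    have h1 : (fun z => ((g z)ᵀ *ᵥ f' z) ⬝ᵥ (q z *ᵥ f z)) =O[Bornology.cobounded ℂ]
        fun z => z ^ e * z ^ d := Asymptotics.IsBigO.fun_sum fun i _ =>
      (Asymptotics.isBigO_pi.1 hf'.isBigO i).mul (Asymptotics.isBigO_pi.1 hf.isBigO i)
    refine h1.congr' ?_ ?_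
    · filter_upwards [eventually_ne_cobounded 0] with z hz
      rw [Matrix.mulVec_transpose, ← Matrix.dotProduct_mulVec, Matrix.mulVec_mulVec, hgq z hz,
        Matrix.one_mulVec]
    · filter_upwards [eventually_ne_cobounded 0] with z hz
      rw [zpow_add₀ hz]
  refine hdiff.apply_eq_of_tendsto_cocompact z ?_
  rw [← Metric.cobounded_eq_cocompact]
  exact hO.trans_tendsto (tendsto_zpow_cobounded_zero hde)

/-- A nonzero vector has a nonzero entry at which `d` is maximal over the support. -/
theorem exists_max_support (d : ι → ℤ) {c : ι → ℂ} (hc : c ≠ 0) :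
    ∃ m, c m ≠ 0 ∧ ∀ j, c j ≠ 0 → d j ≤ d m := by
  classical
  obtain ⟨i, hi⟩ := Function.ne_iff.1 hc
  obtain ⟨m, hm, hmax⟩ := Finset.exists_max_image (Finset.univ.filter fun j => c j ≠ 0) d
    ⟨i, by simpa using hi⟩
  exact ⟨m, by simpa using hm, fun j hj => hmax j (by simpa using hj)⟩

/-- A removable singularity theorem at the origin, phrased at infinity. -/
theorem exists_differentiable_eq_of_isBigO {E : Type*} [NormedAddCommGroup E] [NormedSpace ℂ E]
    [CompleteSpace E] {h : ℂ → E} (hd : DifferentiableOn ℂ h {0}ᶜ)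
    (hO : (fun z => h z⁻¹) =O[Bornology.cobounded ℂ] fun _ => (1 : ℂ)) :
    ∃ h' : ℂ → E, Differentiable ℂ h' ∧ ∀ z, z ≠ 0 → h' z = h z := by
  have hO' : h =O[𝓝[≠] 0] fun _ => (1 : ℂ) := by
    simpa [Function.comp_def] using hO.comp_tendsto tendsto_inv₀_nhdsNE_zero
  refine ⟨Function.update h 0 (limUnder (𝓝[≠] 0) h), ?_, fun z hz => by simp [hz]⟩
  refine differentiableOn_univ.1 (Complex.differentiableOn_update_limUnder_of_isLittleO
    univ_mem (hd.mono fun z hz => hz.2) ?_)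
  have h1 : (fun z => h z - h 0) =O[𝓝[≠] 0] fun _ => (1 : ℂ) :=
    hO'.sub (Asymptotics.isBigO_const_const _ one_ne_zero _)
  refine h1.trans_isLittleO ?_
  rw [Asymptotics.isLittleO_const_left]
  right
  simp only [Function.comp_def, norm_inv, sub_zero]
  exact tendsto_inv_nhdsGT_zero.comp tendsto_norm_nhdsNE_zero

/-- A section with a pole of order at most `d` at infinity, in the chart at infinity. -/
theorem IsSectionOfDegree.exists_chart_infinity {q : ℂ → Matrix ι ι ℂ} {d : ℤ} {f : ℂ → ι → ℂ}
    (hq : ∀ i j, DifferentiableOn ℂ (fun z => q z i j) {0}ᶜ) (hf : IsSectionOfDegree q d f) :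
    ∃ e : ℂ → ι → ℂ, Differentiable ℂ e ∧ ∀ z, z ≠ 0 → q z *ᵥ f z = z ^ d • e z⁻¹ := by
  have h1 : DifferentiableOn ℂ (fun z => q z *ᵥ f z) {0}ᶜ :=
    differentiableOn_pi.2 fun i => DifferentiableOn.fun_sum fun j _ =>
      (hq i j).mul (differentiable_pi.1 hf.differentiable j).differentiableOn
  have h2 : DifferentiableOn ℂ (fun w => w ^ d • (q w⁻¹ *ᵥ f w⁻¹)) {0}ᶜ :=
    (differentiableOn_zpow d _ (Or.inl (by simp))).smul
      (h1.comp (differentiableOn_inv.mono fun z hz => hz) fun z hz => inv_ne_zero hz)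
  obtain ⟨e, he, heq⟩ := exists_differentiable_eq_of_isBigO h2 <| by
    refine ((Asymptotics.isBigO_refl (fun z : ℂ => (z ^ d)⁻¹) _).smul hf.isBigO).congr' ?_ ?_
    · exact Eventually.of_forall fun z => by simp
    · filter_upwards [eventually_ne_cobounded 0] with z hz
      rw [smul_eq_mul, inv_mul_cancel₀ (zpow_ne_zero _ hz)]
  refine ⟨e, he, fun z hz => ?_⟩
  rw [heq _ (inv_ne_zero hz), inv_inv, inv_zpow, smul_inv_smul₀ (zpow_ne_zero _ hz)]

variable [DecidableEq ι]

/-- Sections of the given degrees which form a basis of the fibre at the point `2`. -/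
structure IsSectionFrame (q : ℂ → Matrix ι ι ℂ) (d : ι → ℤ) (f : ι → ℂ → ι → ℂ) : Prop where
  isSection : ∀ j, IsSectionOfDegree q (d j) (f j)
  det_ne_zero : (frame f 2).det ≠ 0

theorem IsSectionFrame.update {q : ℂ → Matrix ι ι ℂ} {d : ι → ℤ} {f : ι → ℂ → ι → ℂ}
    (hf : IsSectionFrame q d f) {m : ι} {d' : ℤ} {f' : ℂ → ι → ℂ}
    (hf' : IsSectionOfDegree q d' f') {p : ℂ} {v : ι → ℂ} (hv : v m ≠ 0)
    (h : p • f' 2 = frame f 2 *ᵥ v) :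
    IsSectionFrame q (Function.update d m d') (Function.update f m f') := by
  refine ⟨fun j => ?_, ?_⟩
  · by_cases hj : j = m
    · subst hj
      simpa using hf'
    · simpa [hj] using hf.isSection j
  · rw [frame_update]
    intro h0
    have h1 : ((frame f 2).updateCol m (p • f' 2)).det = (frame f 2).det * v m := by
      rw [h, ← Matrix.cramer_apply, Matrix.cramer_eq_adjugate_mulVec, Matrix.mulVec_mulVec,
        Matrix.adjugate_mul, Matrix.smul_mulVec, Matrix.one_mulVec, Pi.smul_apply, smul_eq_mul]
    rw [Matrix.det_updateCol_smul, h0, mul_zero] at h1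
    exact mul_ne_zero hf.det_ne_zero hv h1.symm

theorem exists_isSectionFrame {g q : ℂ → Matrix ι ι ℂ}
    (hg : ∀ i j, DifferentiableOn ℂ (fun z => g z i j) {0}ᶜ)
    (hq : ∀ i j, DifferentiableOn ℂ (fun z => q z i j) {0}ᶜ) (hgq : ∀ z, z ≠ 0 → g z * q z = 1) :
    ∃ (N : ℤ) (f : ι → ℂ → ι → ℂ), IsSectionFrame q (fun _ => N) f := by
  obtain ⟨F, N, hF, hF2, hN⟩ := exists_entire_matrix_section hg hq hgq
  refine ⟨N, fun j z i => F z i j, fun j => ⟨differentiable_pi.2 fun i => hF i j,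
    Asymptotics.isBigO_pi.2 fun i => hN i j⟩, ?_⟩
  exact ((Matrix.isUnit_iff_isUnit_det _).1 hF2).ne_zero

/-- The total degree of a frame of sections is bounded below. -/
theorem exists_le_sum_degree {g q : ℂ → Matrix ι ι ℂ}
    (hg : ∀ i j, DifferentiableOn ℂ (fun z => g z i j) {0}ᶜ)
    (hq : ∀ i j, DifferentiableOn ℂ (fun z => q z i j) {0}ᶜ) (hgq : ∀ z, z ≠ 0 → g z * q z = 1) :
    ∃ b : ℤ, ∀ d f, IsSectionFrame q d f → b ≤ ∑ j, d j := by
  obtain ⟨N, f', hf'⟩ := exists_isSectionFrame (g := fun z => (q z)ᵀ) (q := fun z => (g z)ᵀ)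
    (fun i j => hq j i) (fun i j => hg j i) fun z hz => by
      rw [← Matrix.transpose_mul, hgq z hz, Matrix.transpose_one]
  refine ⟨∑ _ : ι, -N, fun d f hf => Finset.sum_le_sum fun j _ => ?_⟩
  by_contra! hlt
  have h0 : (frame f' 2)ᵀ *ᵥ f j 2 = 0 := by
    ext i
    exact (hf.isSection j).dotProduct_eq_zero hgq (hf'.isSection i) (by omega) 2
  have h1 : f j 2 = 0 := Matrix.eq_zero_of_mulVec_eq_zero
    (by rw [Matrix.det_transpose]; exact hf'.det_ne_zero) h0
  refine hf.det_ne_zero (Matrix.det_eq_zero_of_column_eq_zero j fun i => ?_)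
  exact congrFun h1 i

theorem exists_minimal_isSectionFrame {g q : ℂ → Matrix ι ι ℂ}
    (hg : ∀ i j, DifferentiableOn ℂ (fun z => g z i j) {0}ᶜ)
    (hq : ∀ i j, DifferentiableOn ℂ (fun z => q z i j) {0}ᶜ) (hgq : ∀ z, z ≠ 0 → g z * q z = 1) :
    ∃ d f, IsSectionFrame q d f ∧ ∀ d' f', IsSectionFrame q d' f' → ∑ j, d j ≤ ∑ j, d' j := by
  obtain ⟨b, hb⟩ := exists_le_sum_degree hg hq hgq
  obtain ⟨N, f, hf⟩ := exists_isSectionFrame hg hq hgq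
  obtain ⟨s, ⟨d, f, hf, rfl⟩, hmin⟩ := Int.exists_least_of_bdd
    (P := fun s => ∃ d f, IsSectionFrame q d f ∧ ∑ j, d j = s)
    ⟨b, by rintro _ ⟨d, f, hf, rfl⟩; exact hb d f hf⟩ ⟨_, _, f, hf, rfl⟩
  exact ⟨d, f, hf, fun d' f' hf' => hmin _ ⟨d', f', hf', rfl⟩⟩

theorem IsSectionFrame.eq_zero_of_minimal {q : ℂ → Matrix ι ι ℂ} {d : ι → ℤ}
    {f : ι → ℂ → ι → ℂ} (hf : IsSectionFrame q d f)
    (hmin : ∀ d' f', IsSectionFrame q d' f' → ∑ j, d j ≤ ∑ j, d' j) {m : ι} {f' : ℂ → ι → ℂ}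
    (hf' : IsSectionOfDegree q (d m - 1) f') {p : ℂ} {v : ι → ℂ}
    (h : p • f' 2 = frame f 2 *ᵥ v) : v m = 0 := by
  by_contra hv
  have h1 := hmin _ _ (hf.update hf' hv h)
  rw [Finset.sum_update_of_mem (Finset.mem_univ m),
    ← Finset.add_sum_erase _ _ (Finset.mem_univ m), Finset.sdiff_singleton_eq_erase] at h1
  omega

theorem isUnit_of_mulVec_injective {M : Matrix ι ι ℂ} (h : ∀ c, M *ᵥ c = 0 → c = 0) :
    IsUnit M := by
  rw [Matrix.isUnit_iff_isUnit_det, isUnit_iff_ne_zero]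
  intro h0
  obtain ⟨c, hc, hc0⟩ := Matrix.exists_mulVec_eq_zero_iff.2 h0
  exact hc (h c hc0)

theorem IsSectionFrame.isUnit_frame {q : ℂ → Matrix ι ι ℂ} {d : ι → ℤ}
    {f : ι → ℂ → ι → ℂ} (hf : IsSectionFrame q d f)
    (hmin : ∀ d' f', IsSectionFrame q d' f' → ∑ j, d j ≤ ∑ j, d' j) (z₀ : ℂ) :
    IsUnit (frame f z₀) := by
  refine isUnit_of_mulVec_injective fun c hc => ?_
  by_contra hc0
  obtain ⟨m, hm, hmax⟩ := exists_max_support d hc0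
  set h : ℂ → ι → ℂ := fun z => frame f z *ᵥ c with h_def
  have hh : Differentiable ℂ h := by
    simp only [h_def, frame_mulVec]
    exact Differentiable.fun_sum fun j _ => (hf.isSection j).differentiable.fun_const_smul _
  have hO : (fun z => q z *ᵥ h z) =O[Bornology.cobounded ℂ] fun z => z ^ d m := by
    have : (fun z => q z *ᵥ h z) = fun z => ∑ j, c j • (q z *ᵥ f j z) := by
      funext z
      simp only [h_def, frame_mulVec, Matrix.mulVec_sum, Matrix.mulVec_smul]
    rw [this]
    refine Asymptotics.IsBigO.fun_sum fun j _ => ?_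
    by_cases hj : c j = 0
    · simp only [hj, zero_smul]
      exact Asymptotics.isBigO_zero _ _
    · exact ((hf.isSection j).isBigO.const_smul_left (c j)).trans
        (isBigO_zpow_zpow_cobounded (hmax j hj))
  have hds (z : ℂ) : (z - z₀) • dslope h z₀ z = h z := by
    rw [sub_smul_dslope, show h z₀ = 0 from hc, sub_zero]
  refine hm (hf.eq_zero_of_minimal hmin (f' := dslope h z₀) ⟨?_, ?_⟩ (hds 2))
  · exact differentiableOn_univ.1
      ((Complex.differentiableOn_dslope univ_mem).2 hh.differentiableOn)
  · have h1 : (fun z : ℂ => (z - z₀)⁻¹) =O[Bornology.cobounded ℂ] fun z => z ^ (-1 : ℤ) := by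
      simp only [zpow_neg_one]
      refine Asymptotics.IsBigO.of_bound 2 ?_
      filter_upwards [tendsto_norm_cobounded_atTop.eventually_ge_atTop (2 * ‖z₀‖ + 1)] with z hz
      have h2 := norm_sub_norm_le z z₀
      have h3 := norm_nonneg z₀
      rw [norm_inv, norm_inv, ← div_eq_mul_inv, inv_eq_one_div,
        div_le_div_iff₀ (by linarith) (by linarith)]
      linarith
    refine (h1.smul hO).congr' ?_ ?_
    · filter_upwards [eventually_ne_cobounded z₀] with z hz
      rw [← hds z, Matrix.mulVec_smul, smul_smul, inv_mul_cancel₀ (sub_ne_zero.2 hz), one_smul]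
    · filter_upwards [eventually_ne_cobounded 0] with z hz
      rw [smul_eq_mul, ← zpow_add₀ hz, add_comm, sub_eq_add_neg]

theorem IsSectionFrame.isUnit_chart_infinity_zero {q : ℂ → Matrix ι ι ℂ} {d : ι → ℤ}
    {f : ι → ℂ → ι → ℂ} (hf : IsSectionFrame q d f)
    (hmin : ∀ d' f', IsSectionFrame q d' f' → ∑ j, d j ≤ ∑ j, d' j) {e : ι → ℂ → ι → ℂ}
    (he : ∀ j, Differentiable ℂ (e j))
    (hfe : ∀ j z, z ≠ 0 → q z *ᵥ f j z = z ^ d j • e j z⁻¹) : IsUnit (frame e 0) := by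
  refine isUnit_of_mulVec_injective fun c hc => ?_
  by_contra hc0
  obtain ⟨m, hm, hmax⟩ := exists_max_support d hc0
  set v : ι → ℂ := fun i => c i * 2 ^ (d m - d i).toNat with v_def
  have hv : v m = c m := by simp [v_def]
  refine hm (hv ▸ hf.eq_zero_of_minimal hmin (p := 1) (v := v)
    (f' := fun z => ∑ i, (c i * z ^ (d m - d i).toNat) • f i z) ⟨?_, ?_⟩ ?_)
  · exact Differentiable.fun_sum fun i _ =>
      ((differentiable_id.pow _).const_mul _).smul (hf.isSection i).differentiable
  · have h0 : (fun z => frame e z⁻¹ *ᵥ c) =O[Bornology.cobounded ℂ] fun z => z⁻¹ := by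
      have hd : Differentiable ℂ fun w => frame e w *ᵥ c := by
        simp only [frame_mulVec]
        exact Differentiable.fun_sum fun j _ => (he j).fun_const_smul _
      simpa [hc, Function.comp_def] using
        (hd 0).isBigO_sub.comp_tendsto (tendsto_inv₀_cobounded (α := ℂ))
    refine ((Asymptotics.isBigO_refl (fun z : ℂ => z ^ d m) _).smul h0).congr' ?_ ?_
    · filter_upwards [eventually_ne_cobounded 0] with z hz
      rw [frame_mulVec, Finset.smul_sum, Matrix.mulVec_sum]
      refine Finset.sum_congr rfl fun i _ => ?_
      rw [Matrix.mulVec_smul, hfe i z hz, smul_smul, smul_smul]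
      by_cases hi : c i = 0
      · simp [hi]
      · rw [← zpow_natCast, Int.toNat_of_nonneg (by have := hmax i hi; omega), mul_assoc,
          ← zpow_add₀ hz, sub_add_cancel, mul_comm]
    · filter_upwards [eventually_ne_cobounded 0] with z hz
      rw [smul_eq_mul, zpow_sub_one₀ hz]
  · rw [one_smul, frame_mulVec]

/-- **Birkhoff factorization** of a holomorphic invertible matrix on the punctured plane. -/
theorem exists_birkhoff_factorization {g : ℂ → Matrix ι ι ℂ}
    (hg : ∀ i j, DifferentiableOn ℂ (fun z => g z i j) {0}ᶜ) (hu : ∀ z, z ≠ 0 → IsUnit (g z)) :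
    ∃ (a : ι → ℤ) (A B : ℂ → Matrix ι ι ℂ),
      (∀ i j, Differentiable ℂ fun z => A z i j) ∧ (∀ i j, Differentiable ℂ fun z => B z i j) ∧
      (∀ z, IsUnit (A z)) ∧ (∀ z, IsUnit (B z)) ∧
      ∀ z, z ≠ 0 → g z = A z * Matrix.diagonal (fun i => z ^ a i) * B z⁻¹ := by
  have hdet (z : ℂ) (hz : z ≠ 0) : IsUnit (g z).det :=
    (Matrix.isUnit_iff_isUnit_det _).1 (hu z hz)
  have hgq (z : ℂ) (hz : z ≠ 0) : g z * (g z)⁻¹ = 1 := Matrix.mul_nonsing_inv _ (hdet z hz)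
  have hq := differentiableOn_matrix_inv hg hu
  obtain ⟨d, f, hf, hmin⟩ := exists_minimal_isSectionFrame (q := fun z => (g z)⁻¹) hg hq hgq
  choose e he hfe using fun j => (hf.isSection j).exists_chart_infinity hq
  have hA := hf.isUnit_frame hmin
  have hE (z : ℂ) (hz : z ≠ 0) :
      frame f z * Matrix.diagonal (fun i => z ^ (-d i)) = g z * frame e z⁻¹ := by
    ext i j
    have h1 : f j z = z ^ d j • (g z *ᵥ e j z⁻¹) := by
      rw [← Matrix.mulVec_smul, ← hfe j z hz, Matrix.mulVec_mulVec, hgq z hz, Matrix.one_mulVec]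
    rw [Matrix.mul_diagonal, frame, Matrix.of_apply, h1, Pi.smul_apply, smul_eq_mul, zpow_neg,
      mul_comm, inv_mul_cancel_left₀ (zpow_ne_zero _ hz)]
    rfl
  have hEu (w : ℂ) : IsUnit (frame e w) := by
    rcases eq_or_ne w 0 with rfl | hw
    · exact hf.isUnit_chart_infinity_zero hmin he hfe
    · have h1 := hE w⁻¹ (inv_ne_zero hw)
      rw [inv_inv] at h1
      refine (IsUnit.mul_iff.1 (h1 ▸ (hA _).mul ?_)).2
      rw [Matrix.isUnit_diagonal, Pi.isUnit_iff]
      exact fun i => isUnit_iff_ne_zero.2 (zpow_ne_zero _ (inv_ne_zero hw))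
  refine ⟨fun j => -d j, frame f, fun w => (frame e w)⁻¹, fun i j => ?_, fun i j => ?_, hA,
    fun w => Matrix.isUnit_nonsing_inv_iff.2 (hEu w), fun z hz => ?_⟩
  · exact differentiable_pi.1 (hf.isSection j).differentiable i
  · exact differentiableOn_univ.1 (differentiableOn_matrix_inv (fun i j =>
      (differentiable_pi.1 (he j) i).differentiableOn) (fun w _ => hEu w) i j)
  · rw [hE z hz, Matrix.mul_nonsing_inv_cancel_right _ _
      ((Matrix.isUnit_iff_isUnit_det _).1 (hEu _))]

end Sections

end BirkhoffFactorization

/-- Grothendieck's splitting theorem over `ℂP¹`, in clutching form.  A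
holomorphic vector bundle of rank `n` over `ℂP¹` is given by a transition
matrix `g`, holomorphic and invertible on `ℂ \ {0}` (the overlap of the two
standard charts).  The theorem asserts Birkhoff factorization
`g(z) = A(z) · diag(z^{a₁}, …, z^{a_n}) · B(1/z)` with `A`, `B` holomorphic
and invertible on all of `ℂ`, i.e. the bundle is isomorphic to
`O(a₁) ⊕ ⋯ ⊕ O(a_n)`.  In particular (rank ≥ 2) every holomorphic line
subbundle admits a holomorphic complement. -/
theorem stmt7 (n : ℕ) (g : ℂ → Matrix (Fin n) (Fin n) ℂ)
    (hg_hol : ∀ i j, AnalyticOn ℂ (fun z => g z i j) {z : ℂ | z ≠ 0})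
    (hg_inv : ∀ z : ℂ, z ≠ 0 → IsUnit (g z)) :
    ∃ (a : Fin n → ℤ) (A B : ℂ → Matrix (Fin n) (Fin n) ℂ),
      (∀ i j, AnalyticOn ℂ (fun z => A z i j) Set.univ) ∧
      (∀ i j, AnalyticOn ℂ (fun z => B z i j) Set.univ) ∧
      (∀ z, IsUnit (A z)) ∧ (∀ z, IsUnit (B z)) ∧
      ∀ z : ℂ, z ≠ 0 →
        g z = A z * Matrix.diagonal (fun i => z ^ (a i)) * B z⁻¹ := by
  obtain ⟨a, A, B, hA, hB, hA', hB', h⟩ :=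
    BirkhoffFactorization.exists_birkhoff_factorization
      (fun i j => (hg_hol i j).differentiableOn) hg_inv
  exact ⟨a, A, B,
    fun i j => ((hA i j).differentiableOn.analyticOnNhd isOpen_univ).analyticOn,
    fun i j => ((hB i j).differentiableOn.analyticOnNhd isOpen_univ).analyticOn, hA', hB', h⟩
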